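/- arXiv:2205.01153 — 2 statements merged into one kernel-verified Lean document; each statement's English description precedes it below -/
import Mathlib

section
/- Let (R, m) be a complete regular local domain, let u ∈ m, and let M ≥ 2 be an integer. Let v be an element of an algebraic closure of Frac(R) with v^M = u, let R' be the integral closure of R[v] in Frac(R)(v), and let B be a big Cohen–Macaulay algebra over R'. Let K ⊆ R be an ideal. If the image of v^{M−1} in B lies in K·B, then u ∈ m·K. -/
set_option synthInstance.maxHeartbeats 1000000
set_option maxHeartbeats 2000000

open Ideal IsLocalRing

/-- A regular local ring: a Noetherian local ring whose maximal ideal can be generated by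
`dim R` elements. -/
def IsRegularLocal (A : Type*) [CommRing A] : Prop :=
  IsNoetherianRing A ∧ ∃ h : IsLocalRing A,
    letI := h
    ∃ s : Finset A, Ideal.span (s : Set A) = IsLocalRing.maximalIdeal A ∧
      (s.card : WithBot ℕ∞) = ringKrullDim A

/-- `B` is a (balanced) big Cohen–Macaulay algebra over the Noetherian local ring `S`:
every system of parameters of `S` is a regular sequence on `B`. -/
noncomputable def IsBigCohenMacaulay (S : Type*) [CommRing S] (hS : IsLocalRing S)
    (B : Type*) [CommRing B] [Algebra S B] : Prop :=
  letI := hS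
  ∀ xs : List S, (xs.length : WithBot ℕ∞) = ringKrullDim S →
    (∀ x ∈ xs, x ∈ maximalIdeal S) →
    (Ideal.span {x : S | x ∈ xs}).radical = maximalIdeal S →
    RingTheory.Sequence.IsRegular B (xs.map (algebraMap S B))

/-!
Write `m` for the maximal ideal of `R`. A regular system of parameters generates `m` and is a
regular sequence on `B`, so `Tor₁(R/m, B) = 0`, and then `Tor₁(R/I, B) = 0` for every `I ⊇ mⁿ`, as
`R/I` has a finite filtration with quotients `R/m`. Together with Krull's intersection theorem this
yields `(JB : a) ⊆ mB` for every ideal `J` and every `a ∉ J`.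

Suppose `u ∉ mK`. An ideal `J ⊇ mK` maximal among those not containing `u` satisfies `K ⊆ J + (u)`,
so `v ^ (M - 1) = j + b u` with `j ∈ JB`. Multiplying by `v` gives `u (1 - v b) ∈ JB`, hence
`1 - v b ∈ mB`. But `(v b) ^ M = u b ^ M ∈ mB`, so `1 ∈ mB`, contradicting `mB ≠ B`.
-/

open scoped TensorProduct

section TorOne

variable {R : Type*} [CommRing R] {N : Type*} [AddCommGroup N] [Module R N]

/-- The multiplication map `I ⊗ N → N`. Its image is `I N` and its kernel is `Tor₁(R/I, N)`. -/
def tensorSMul (I : Ideal R) (N : Type*) [AddCommGroup N] [Module R N] : I ⊗[R] N →ₗ[R] N :=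
  TensorProduct.lift ((LinearMap.lsmul R N).comp I.subtype)

/-- The condition `Tor₁(R/I, N) = 0`, phrased as injectivity of `I ⊗ N → N`. -/
def TorOneVanishes (I : Ideal R) (N : Type*) [AddCommGroup N] [Module R N] : Prop :=
  Function.Injective (tensorSMul I N)

@[simp]
lemma tensorSMul_tmul (I : Ideal R) (i : I) (n : N) : tensorSMul I N (i ⊗ₜ n) = (i : R) • n :=
  rfl

lemma range_tensorSMul (I : Ideal R) : LinearMap.range (tensorSMul I N) = I • ⊤ := by
  apply le_antisymm
  · rintro _ ⟨t, rfl⟩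
    induction t with
    | zero => simp
    | tmul i n => exact Submodule.smul_mem_smul i.2 Submodule.mem_top
    | add s t hs ht => rw [map_add]; exact add_mem hs ht
  · exact Submodule.smul_le.2 fun i hi n _ ↦ ⟨⟨i, hi⟩ ⊗ₜ n, rfl⟩

lemma tensorSMul_rTensor_inclusion {J I : Ideal R} (h : J ≤ I) (t : J ⊗[R] N) :
    tensorSMul I N ((Submodule.inclusion h).rTensor N t) = tensorSMul J N t := by
  rw [← LinearMap.comp_apply]
  congr 1
  ext; simp

lemma tmul_tensorSMul {J I : Ideal R} (h : J ≤ I) (x : I) (t : J ⊗[R] N) :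
    x ⊗ₜ tensorSMul J N t = (Submodule.inclusion h).rTensor N ((x : R) • t) := by
  induction t with
  | zero => simp
  | tmul j n =>
    have hxj : (j : R) • x = (x : R) • Submodule.inclusion h j := Subtype.ext (mul_comm _ _)
    rw [tensorSMul_tmul, ← TensorProduct.smul_tmul, hxj, map_smul, LinearMap.rTensor_tmul,
      TensorProduct.smul_tmul']
  | add s t hs ht => rw [map_add, TensorProduct.tmul_add, hs, ht, smul_add, map_add]

section AdjoinElement

variable {C : Type*} [AddCommGroup C] [Module R C] (A : Submodule R C) (c : C)

/-- Multiplication by `c`, as a map `(A : c) → A`. -/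
def colonSMul : A.colon {c} →ₗ[R] A :=
  ((LinearMap.toSpanSingleton R C c).comp (A.colon {c}).subtype).codRestrict A
    fun r ↦ Submodule.mem_colon_singleton.1 r.2

@[simp]
lemma coe_colonSMul (r : A.colon {c}) : (colonSMul A c r : C) = (r : R) • c :=
  rfl

/-- The element `c` of `A + R c`. -/
def adjoined : ↥(A ⊔ Submodule.span R {c}) :=
  ⟨c, Submodule.mem_sup_right (Submodule.mem_span_singleton_self c)⟩

/-- The presentation `A × R → A + R c`, `(a, r) ↦ a + r c`. -/
def supPresentation : A × R →ₗ[R] ↥(A ⊔ Submodule.span R {c}) :=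
  (Submodule.inclusion le_sup_left).coprod (LinearMap.toSpanSingleton R _ (adjoined A c))

lemma supPresentation_surjective : Function.Surjective (supPresentation A c) := by
  rintro ⟨d, hd⟩
  obtain ⟨a, ha, y, hy, rfl⟩ := Submodule.mem_sup.1 hd
  obtain ⟨r, rfl⟩ := Submodule.mem_span_singleton.1 hy
  exact ⟨(⟨a, ha⟩, r), rfl⟩

lemma exact_colonSMul_supPresentation :
    Function.Exact ((colonSMul A c).prod (-(A.colon {c}).subtype)) (supPresentation A c) := by
  rintro ⟨a, r⟩
  constructor
  · intro h
    have hac : (a : C) + r • c = 0 := congrArg Subtype.val h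
    have ha : (a : C) = -r • c := by rw [neg_smul, eq_neg_of_add_eq_zero_left hac]
    have hr : -r ∈ A.colon {c} := Submodule.mem_colon_singleton.2 (ha ▸ a.2)
    exact ⟨⟨-r, hr⟩, Prod.ext (Subtype.ext ha.symm) (neg_neg r)⟩
  · rintro ⟨s, hs⟩
    rw [← hs]
    exact Subtype.ext (by simp [supPresentation, adjoined])

lemma exists_eq_rTensor_inclusion_add_tmul (z : ↥(A ⊔ Submodule.span R {c}) ⊗[R] N) :
    ∃ (s : A ⊗[R] N) (n : N),
      z = (Submodule.inclusion le_sup_left).rTensor N s + adjoined A c ⊗ₜ n := by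
  obtain ⟨p, rfl⟩ := LinearMap.rTensor_surjective N (supPresentation_surjective A c) z
  refine ⟨(LinearMap.fst R A R).rTensor N p,
    TensorProduct.lid R N ((LinearMap.snd R A R).rTensor N p), ?_⟩
  induction p with
  | zero => simp
  | tmul p n =>
    simp [supPresentation, TensorProduct.add_tmul, TensorProduct.smul_tmul']
  | add p q hp hq => simp only [map_add, hp, hq, TensorProduct.tmul_add]; abel

variable {A c} in
lemma exists_of_rTensor_inclusion_eq_tmul {s : A ⊗[R] N} {n : N}
    (h : (Submodule.inclusion (le_sup_left : A ≤ A ⊔ Submodule.span R {c})).rTensor N s =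
      adjoined A c ⊗ₜ n) :
    ∃ t : A.colon {c} ⊗[R] N,
      (colonSMul A c).rTensor N t = s ∧ tensorSMul (A.colon {c}) N t = n := by
  let p : (A × R) ⊗[R] N := (LinearMap.inl R A R).rTensor N s - (0, 1) ⊗ₜ n
  have hp : (supPresentation A c).rTensor N p = 0 := by
    rw [map_sub, ← LinearMap.rTensor_comp_apply, supPresentation, LinearMap.coprod_inl, h]
    simp
  obtain ⟨t, ht⟩ := (rTensor_exact N (exact_colonSMul_supPresentation A c)
    (supPresentation_surjective A c) p).1 hp
  refine ⟨t, ?_, ?_⟩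
  · have := congrArg ((LinearMap.fst R A R).rTensor N) ht
    simpa [p, ← LinearMap.rTensor_comp_apply] using this
  · have := congrArg (fun q ↦ TensorProduct.lid R N ((LinearMap.snd R A R).rTensor N q)) ht
    simpa [p, tensorSMul, ← LinearMap.lid_comp_rTensor, ← LinearMap.rTensor_comp_apply] using this

end AdjoinElement

lemma rTensor_inclusion_injective {C : Type*} [AddCommGroup C] [Module R C] {A : Submodule R C}
    {c : C} (h : TorOneVanishes (A.colon {c}) N) :
    Function.Injective
      ((Submodule.inclusion (le_sup_left : A ≤ A ⊔ Submodule.span R {c})).rTensor N) := by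
  rw [injective_iff_map_eq_zero]
  intro s hs
  obtain ⟨t, rfl, ht⟩ := exists_of_rTensor_inclusion_eq_tmul (n := (0 : N)) (by simpa using hs)
  rw [(injective_iff_map_eq_zero _).1 h t ht, map_zero]

namespace TorOneVanishes

lemma bot : TorOneVanishes (⊥ : Ideal R) N := Function.injective_of_subsingleton _

lemma top : TorOneVanishes (⊤ : Ideal R) N := by
  rw [TorOneVanishes, tensorSMul, ← LinearMap.lid_comp_rTensor]
  exact (TensorProduct.lid R N).injective.comp
    ((Submodule.topEquiv (R := R) (M := R)).rTensor N).injective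

lemma sup_span_singleton {J : Ideal R} {x : R} (hJ : TorOneVanishes J N)
    (hx : IsSMulRegular (N ⧸ (J • ⊤ : Submodule R N)) x) :
    TorOneVanishes (J ⊔ Ideal.span {x}) N := by
  refine (injective_iff_map_eq_zero _).2 fun z hz ↦ ?_
  obtain ⟨s, n, rfl⟩ := exists_eq_rTensor_inclusion_add_tmul J x z
  rw [map_add, tensorSMul_rTensor_inclusion, tensorSMul_tmul] at hz
  obtain ⟨t, rfl⟩ : n ∈ LinearMap.range (tensorSMul J N) := by
    rw [range_tensorSMul]
    have hxn : x • n = -tensorSMul J N s := eq_neg_of_add_eq_zero_right hz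
    refine mem_of_isSMulRegular_quotient_of_smul_mem hx ?_
    rw [hxn, ← range_tensorSMul]
    exact neg_mem ⟨s, rfl⟩
  have hst : tensorSMul J N (s + x • t) = 0 := by rw [map_add, map_smul]; exact hz
  rw [tmul_tensorSMul le_sup_left, ← map_add]
  exact (congrArg _ ((injective_iff_map_eq_zero _).1 hJ _ hst)).trans (map_zero _)

lemma ofList {rs : List R} (h : RingTheory.Sequence.IsWeaklyRegular N rs) :
    TorOneVanishes (Ideal.ofList rs) N := by
  induction rs using List.reverseRecOn with
  | nil => rw [Ideal.ofList_nil]; exact bot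
  | append_singleton rs r ih =>
    rw [RingTheory.Sequence.isWeaklyRegular_append_iff,
      RingTheory.Sequence.isWeaklyRegular_singleton_iff] at h
    rw [Ideal.ofList_append, Ideal.ofList_singleton]
    exact (ih h.1).sup_span_singleton h.2

lemma of_colon_of_sup {J : Ideal R} {c : R} (hcolon : TorOneVanishes (J.colon {c}) N)
    (hsup : TorOneVanishes (J ⊔ Ideal.span {c}) N) : TorOneVanishes J N := by
  intro s t hst
  refine rTensor_inclusion_injective hcolon (hsup ?_)
  rwa [tensorSMul_rTensor_inclusion, tensorSMul_rTensor_inclusion]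

lemma mem_colon_smul_top {J : Ideal R} {a : R} (h : TorOneVanishes (J ⊔ Ideal.span {a}) N)
    {y : N} (hy : a • y ∈ (J • ⊤ : Submodule R N)) :
    y ∈ (J.colon {a} • ⊤ : Submodule R N) := by
  rw [← range_tensorSMul] at hy ⊢
  obtain ⟨s, hs⟩ := hy
  obtain ⟨t, -, ht⟩ := exists_of_rTensor_inclusion_eq_tmul (A := J) (c := a) (s := s) (n := y)
    (h (by rw [tensorSMul_rTensor_inclusion, hs]; rfl))
  exact ⟨t, ht⟩

end TorOneVanishes

variable [IsNoetherianRing R]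

lemma exists_colon_singleton_eq_of_pow_le {I J : Ideal R} [hI : I.IsMaximal] {n : ℕ}
    (hIJ : I ^ n ≤ J) (hJ : J ≠ ⊤) : ∃ c, J.colon {c} = I := by
  have := Ideal.Quotient.nontrivial_iff.2 hJ
  obtain ⟨P, hP⟩ := associatedPrimes.nonempty R (R ⧸ J)
  rw [AssociatedPrimes.mem_iff, isAssociatedPrime_iff] at hP
  obtain ⟨hPprime, c, rfl⟩ := hP
  obtain ⟨c, rfl⟩ := Submodule.mkQ_surjective J c
  have hcolon : Submodule.colon ⊥ {J.mkQ c} = J.colon {c} := by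
    ext r
    rw [Submodule.mem_colon_singleton, Submodule.mem_colon_singleton, ← map_smul,
      Submodule.mem_bot, Submodule.mkQ_apply, Submodule.Quotient.mk_eq_zero]
  rw [hcolon] at hPprime
  have hIle : I ≤ J.colon {c} := hPprime.le_of_pow_le (hIJ.trans Ideal.le_colon)
  exact ⟨c, (hI.eq_of_le hPprime.ne_top hIle).symm⟩

lemma TorOneVanishes.of_pow_le {I : Ideal R} [I.IsMaximal] (hI : TorOneVanishes I N) {n : ℕ}
    {J : Ideal R} (hIJ : I ^ n ≤ J) : TorOneVanishes J N := by
  induction J using WellFoundedGT.induction with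
  | ind J ih =>
    by_cases hJ : J = ⊤
    · exact hJ ▸ .top
    obtain ⟨c, hc⟩ := exists_colon_singleton_eq_of_pow_le hIJ hJ
    have hcJ : c ∉ J := fun h ↦ Ideal.IsPrime.ne_top' (I := I) <| by
      rw [← hc, Submodule.colon_eq_top_iff_subset, Set.singleton_subset_iff]; exact h
    have hlt : J < J ⊔ Ideal.span {c} := by simpa using hcJ
    exact .of_colon_of_sup (hc ▸ hI) (ih _ hlt (hIJ.trans le_sup_left))

variable [IsLocalRing R]

lemma exists_notMem_sup_maximalIdeal_pow {J : Ideal R} {a : R} (ha : a ∉ J) :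
    ∃ n : ℕ, a ∉ J ⊔ maximalIdeal R ^ n := by
  by_contra! h
  have hHausdorff : IsHausdorff (maximalIdeal R) (R ⧸ J) := inferInstance
  refine ha ((Submodule.Quotient.mk_eq_zero J).1 (hHausdorff.haus _ fun n ↦ SModEq.zero.2 ?_))
  obtain ⟨j, hj, r, hr, hjr⟩ := Submodule.mem_sup.1 (h n)
  have ha_eq : Submodule.Quotient.mk a = r • (1 : R ⧸ J) := by
    rw [← hjr, Submodule.Quotient.mk_add, (Submodule.Quotient.mk_eq_zero J).2 hj, zero_add,
      Algebra.smul_def, mul_one]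
    rfl
  rw [ha_eq]
  exact Submodule.smul_mem_smul hr Submodule.mem_top

lemma TorOneVanishes.mem_maximalIdeal_smul_top (h : TorOneVanishes (maximalIdeal R) N)
    {J : Ideal R} {a : R} (ha : a ∉ J) {y : N} (hy : a • y ∈ (J • ⊤ : Submodule R N)) :
    y ∈ (maximalIdeal R • ⊤ : Submodule R N) := by
  obtain ⟨n, hn⟩ := exists_notMem_sup_maximalIdeal_pow ha
  set J' := J ⊔ maximalIdeal R ^ n
  have hJ' : TorOneVanishes (J' ⊔ Ideal.span {a}) N :=
    h.of_pow_le (le_sup_right.trans le_sup_left)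
  have hcolon : J'.colon {a} ≤ maximalIdeal R := by
    refine le_maximalIdeal fun htop ↦ hn ?_
    rwa [Submodule.colon_eq_top_iff_subset, Set.singleton_subset_iff] at htop
  exact Submodule.smul_mono_left hcolon
    (hJ'.mem_colon_smul_top (Submodule.smul_mono_left le_sup_left hy))

end TorOne

section DescentOfMembership

variable {R : Type*} [CommRing R] [IsLocalRing R] [IsNoetherianRing R]

lemma exists_notMem_le_sup_span_singleton {K : Ideal R}
    {u : R} (hu : u ∉ maximalIdeal R * K) : ∃ J : Ideal R, u ∉ J ∧ K ≤ J ⊔ Ideal.span {u} := by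
  obtain ⟨J, ⟨hmK, huJ⟩, hmax⟩ := set_has_maximal_iff_noetherian.2 ‹_›
    {J : Ideal R | maximalIdeal R * K ≤ J ∧ u ∉ J} ⟨_, le_rfl, hu⟩
  refine ⟨J, huJ, fun k hk ↦ ?_⟩
  by_cases hkJ : k ∈ J
  · exact Ideal.mem_sup_left hkJ
  have huk : u ∈ J ⊔ Ideal.span {k} := by
    by_contra huk
    exact hmax _ ⟨hmK.trans le_sup_left, huk⟩ (by simpa using hkJ)
  obtain ⟨j, hj, y, hy, rfl⟩ := Submodule.mem_sup.1 huk
  obtain ⟨r, rfl⟩ := Ideal.mem_span_singleton'.1 hy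
  have hr : IsUnit r := by
    by_contra hr
    exact huJ (J.add_mem hj (hmK (Ideal.mul_mem_mul hr hk)))
  have hrk : j + r * k - j ∈ J ⊔ Ideal.span {j + r * k} :=
    sub_mem (Ideal.mem_sup_right (Ideal.mem_span_singleton_self _)) (Ideal.mem_sup_left hj)
  rwa [add_sub_cancel_left, Ideal.unit_mul_mem_iff_mem _ hr] at hrk

theorem TorOneVanishes.mem_maximalIdeal_mul {B : Type*}
    [CommRing B] [Algebra R B] (hTor : TorOneVanishes (maximalIdeal R) B)
    (hne : (maximalIdeal R).map (algebraMap R B) ≠ ⊤) {u : R} (hu : u ∈ maximalIdeal R) {n : ℕ}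
    {w : B} (hw : w ^ (n + 1) = algebraMap R B u) {K : Ideal R}
    (hmem : w ^ n ∈ K.map (algebraMap R B)) : u ∈ maximalIdeal R * K := by
  set mB := (maximalIdeal R).map (algebraMap R B)
  by_contra hcon
  obtain ⟨J, huJ, hKJ⟩ := exists_notMem_le_sup_span_singleton hcon
  obtain ⟨j, hj, b, hjb⟩ : ∃ j ∈ J.map (algebraMap R B), ∃ b, j + b * algebraMap R B u = w ^ n := by
    have := Ideal.map_mono hKJ hmem
    rw [Ideal.map_sup, Ideal.map_span, Set.image_singleton] at this
    simpa [Submodule.mem_sup, Ideal.mem_span_singleton'] using this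
  have hwb : 1 - w * b ∈ mB := by
    have huwb : algebraMap R B u * (1 - w * b) = w * j := by
      linear_combination -w * hjb - hw
    have hmem_smul : 1 - w * b ∈ (maximalIdeal R • ⊤ : Submodule R B) := by
      refine hTor.mem_maximalIdeal_smul_top huJ ?_
      rw [Ideal.smul_top_eq_map, Submodule.restrictScalars_mem, Algebra.smul_def, huwb]
      exact Ideal.mul_mem_left _ _ hj
    rwa [Ideal.smul_top_eq_map] at hmem_smul
  have hwb_pow : (w * b) ^ (n + 1) ∈ mB := by
    rw [mul_pow, hw]
    exact Ideal.mul_mem_right _ _ (Ideal.mem_map_of_mem _ hu)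
  have h_one_sub : 1 - (w * b) ^ (n + 1) ∈ mB :=
    Ideal.mem_of_dvd _ (by simpa using sub_dvd_pow_sub_pow 1 (w * b) (n + 1)) hwb
  exact hne ((Ideal.eq_top_iff_one _).2 (by simpa using add_mem h_one_sub hwb_pow))

end DescentOfMembership

section IntegralExtension

variable {R S : Type*} [CommRing R] [CommRing S] [Algebra R S] [Algebra.IsIntegral R S]

lemma ringKrullDim_eq_of_isIntegral [FaithfulSMul R S] : ringKrullDim S = ringKrullDim R := by
  apply le_antisymm
  · exact Order.krullDim_le_of_strictMono (PrimeSpectrum.comap (algebraMap R S))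
      fun p q hpq ↦ Ideal.IsIntegral.comap_lt_comap (I := p.asIdeal) (J := q.asIdeal) hpq
  · refine iSup_le fun l ↦ ?_
    obtain ⟨P, hP⟩ := (inferInstance : Nonempty (l.head.asIdeal.primesOver S))
    have := hP.1
    have := hP.2
    obtain ⟨l', hl', -⟩ := Ideal.exists_ltSeries_of_hasGoingUp (S := S) l P
    exact hl' ▸ Order.LTSeries.length_le_krullDim l'

variable [IsLocalRing R] [IsLocalRing S]

lemma radical_map_maximalIdeal :
    ((maximalIdeal R).map (algebraMap R S)).radical = maximalIdeal S := by
  have hcomap : (maximalIdeal S).comap (algebraMap R S) = maximalIdeal R :=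
    IsLocalRing.eq_maximalIdeal (Ideal.isMaximal_comap_of_isIntegral_of_isMaximal _)
  apply le_antisymm
  · exact (Ideal.IsPrime.radical_le_iff inferInstance).2 (Ideal.map_le_iff_le_comap.2 hcomap.ge)
  · rw [Ideal.radical_eq_sInf]
    rintro x hx
    refine Ideal.mem_sInf.2 fun {P} ⟨hmP, hP⟩ ↦ ?_
    have hPcomap : maximalIdeal R = P.comap (algebraMap R S) :=
      (maximalIdeal.isMaximal R).eq_of_le (hP.comap _).ne_top (Ideal.map_le_iff_le_comap.1 hmP)
    have hPmax : P.IsMaximal :=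
      Ideal.isMaximal_of_isIntegral_of_isMaximal_comap P (hPcomap ▸ maximalIdeal.isMaximal R)
    exact (IsLocalRing.eq_maximalIdeal hPmax).symm ▸ hx

lemma IsBigCohenMacaulay.isRegular_of_isIntegral [FaithfulSMul R S] {B : Type*} [CommRing B]
    [Algebra S B] [Algebra R B] [IsScalarTower R S B] (hB : IsBigCohenMacaulay S ‹_› B)
    {xs : List R} (hlength : (xs.length : WithBot ℕ∞) = ringKrullDim R)
    (hspan : Ideal.ofList xs = maximalIdeal R) :
    RingTheory.Sequence.IsRegular B (xs.map (algebraMap R B)) := by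
  have hrad : (Ideal.ofList (xs.map (algebraMap R S))).radical = maximalIdeal S := by
    rw [← Ideal.map_ofList, hspan, radical_map_maximalIdeal]
  have h := hB (xs.map (algebraMap R S))
    (by rw [List.length_map, hlength, ringKrullDim_eq_of_isIntegral (R := R) (S := S)])
    (fun x hx ↦ hrad ▸ Ideal.le_radical (Ideal.subset_span hx)) hrad
  rwa [List.map_map, ← RingHom.coe_comp, ← IsScalarTower.algebraMap_eq] at h

end IntegralExtension

lemma isIntegral_restrictScalars_integralClosure_adjoin {R A : Type*} [CommRing R] [CommRing A]
    [Algebra R A] {s : Set A} (hs : ∀ x ∈ s, IsIntegral R x) :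
    Algebra.IsIntegral R ((integralClosure (Algebra.adjoin R s) A).restrictScalars R) := by
  have := Algebra.IsIntegral.adjoin hs
  refine ⟨fun x ↦ ?_⟩
  have hx : IsIntegral R (x : A) := isIntegral_trans (A := Algebra.adjoin R s) _ x.2
  exact (isIntegral_algHom_iff (Subalgebra.val _) Subtype.val_injective).1 hx

theorem stmt11_general {R S B : Type*} [CommRing R] [IsLocalRing R] (hreg : IsRegularLocal R)
    [CommRing S] [Algebra R S] [Algebra.IsIntegral R S] [FaithfulSMul R S]
    (hS : IsLocalRing S) [CommRing B] [Algebra S B] [Algebra R B] [IsScalarTower R S B]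
    (hB : IsBigCohenMacaulay S hS B) {u : R} (hu : u ∈ maximalIdeal R) {n : ℕ} {w : B}
    (hw : w ^ (n + 1) = algebraMap R B u) {K : Ideal R}
    (hmem : w ^ n ∈ K.map (algebraMap R B)) : u ∈ maximalIdeal R * K := by
  obtain ⟨hnoeth, _, s, hs, hcard⟩ := hreg
  have hspan : Ideal.ofList s.toList = maximalIdeal R := by simpa [Ideal.ofList] using hs
  have hregular := hB.isRegular_of_isIntegral (by simpa using hcard) hspan
  have hTor : TorOneVanishes (maximalIdeal R) B :=
    hspan ▸ .ofList ((RingTheory.Sequence.isWeaklyRegular_map_algebraMap_iff B B _).1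
      hregular.toIsWeaklyRegular)
  have hne : (maximalIdeal R).map (algebraMap R B) ≠ ⊤ := fun htop ↦
    hregular.top_ne_smul (by rw [← Ideal.map_ofList, hspan, htop, Submodule.top_smul])
  exact hTor.mem_maximalIdeal_mul hne hu hw hmem

theorem stmt11 {R : Type*} [CommRing R] [IsDomain R] [IsLocalRing R]
    (hreg : IsRegularLocal R) [IsAdicComplete (maximalIdeal R) R]
    (u : R) (hu : u ∈ maximalIdeal R) (M : ℕ) (hM : 2 ≤ M)
    (v : AlgebraicClosure (FractionRing R))
    (hv : v ^ M = algebraMap R (AlgebraicClosure (FractionRing R)) u)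
    (L : IntermediateField (FractionRing R) (AlgebraicClosure (FractionRing R)))
    (hL : L = IntermediateField.adjoin (FractionRing R) {v})
    (v' : L) (hv' : (v' : AlgebraicClosure (FractionRing R)) = v)
    (R' : Subalgebra R L)
    (hR' : R' = (integralClosure (Algebra.adjoin R {v'}) L).restrictScalars R)
    (w : R') (hw : (w : L) = v')
    (B : Type*) [CommRing B] [Algebra R' B] [Algebra R B] [IsScalarTower R R' B]
    (hloc : IsLocalRing R') (hB : IsBigCohenMacaulay R' hloc B)
    (K : Ideal R)
    (hmem : algebraMap R' B w ^ (M - 1) ∈ Ideal.map (algebraMap R B) K) :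
    u ∈ maximalIdeal R * K := by
  subst hR' hv'
  obtain ⟨n, rfl⟩ : ∃ n, M = n + 1 := ⟨M - 1, by omega⟩
  have hv'M : v' ^ (n + 1) = algebraMap R L u := Subtype.ext hv
  have hv'int : IsIntegral R v' := .of_pow n.succ_pos (hv'M ▸ isIntegral_algebraMap)
  have := isIntegral_restrictScalars_integralClosure_adjoin (s := {v'}) (by simpa using hv'int)
  have : FaithfulSMul R L := .trans R (FractionRing R) L
  have : FaithfulSMul R ((integralClosure (Algebra.adjoin R {v'}) L).restrictScalars R) :=
    .tower_bot R _ L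
  have hwM : w ^ (n + 1) = algebraMap R _ u :=
    Subtype.ext ((congrArg (· ^ (n + 1)) hw).trans hv'M)
  have hwB : algebraMap _ B w ^ (n + 1) = algebraMap R B u := by
    rw [← map_pow, hwM, ← IsScalarTower.algebraMap_apply]
  exact stmt11_general hreg hloc hB hu hwB hmem
end

section
/- Let (R, m) be a regular local ring and let B be a big Cohen–Macaulay algebra over R. Then the structure map R → B is faithfully flat; consequently, for every ideal I ⊆ R the preimage of I·B under R → B equals I (that is, IB ∩ R = I). -/
open Ideal IsLocalRing

/-!
The `R`-module `B` is flat iff its character module `E` is injective, which by Baer's criterion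
follows once `Ext¹(R ⧸ I, E) = 0` for every ideal `I`. Since `R` has a regular sequence generating
its maximal ideal, every finitely generated module has finite projective dimension, so
`Extⁱ(-, E)` vanishes on such modules for large `i`, and one descends on `i`. By prime filtrations
it suffices to treat `R ⧸ p`. As `R` is Cohen–Macaulay, `R ⧸ p` embeds into `R ⧸ (x₁, …, xₖ)` for
some regular sequence on `R`; this sequence extends to a system of parameters, hence is regular on
`B`, and that forces `Extⁱ(R ⧸ (x₁, …, xₖ), E) = 0` for all `i ≥ 1`. The long exact sequence of
the embedding then carries the vanishing from `i + 1` down to `i`.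
-/

open RingTheory.Sequence CategoryTheory Abelian
open scoped Pointwise TensorProduct

universe u v w

section RegularLocalRing

variable {R : Type*} [CommRing R]

lemma exists_span_insert_eq_maximalIdeal [IsLocalRing R] [IsNoetherianRing R] {x : R}
    (hx : x ∈ maximalIdeal R) (hx2 : x ∉ maximalIdeal R ^ 2) :
    ∃ t : Finset R, t.card + 1 = (maximalIdeal R).spanFinrank ∧
      Ideal.span (insert x (t : Set R)) = maximalIdeal R := by
  classical
  obtain ⟨s, hcard, hs⟩ :=
    (IsNoetherian.noetherian (maximalIdeal R)).exists_span_finset_card_eq_spanFinrank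
  replace hs : Ideal.span (s : Set R) = maximalIdeal R := hs
  obtain ⟨a, ha⟩ := Submodule.mem_span_finset'.mp (hs ▸ hx : x ∈ Ideal.span (s : Set R))
  obtain ⟨⟨z, hz⟩, haz⟩ : ∃ z, IsUnit (a z) := by
    by_contra! hnu
    refine hx2 (ha ▸ sum_mem fun z _ ↦ ?_)
    rw [pow_two]
    exact Ideal.mul_mem_mul ((mem_maximalIdeal _).mpr (hnu z))
      (hs ▸ Ideal.subset_span z.2)
  refine ⟨s.erase z, by rw [Finset.card_erase_add_one hz, hcard], le_antisymm ?_ ?_⟩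
  · rw [Ideal.span_le, Set.insert_subset_iff]
    exact ⟨hx, fun y hy ↦ hs ▸ Ideal.subset_span (Finset.mem_of_mem_erase hy)⟩
  · rw [← hs, Ideal.span_le]
    intro y hy
    obtain rfl | hyz := eq_or_ne y z
    · rw [← Finset.add_sum_erase _ _ (Finset.mem_univ ⟨y, hz⟩)] at ha
      have hax : a ⟨y, hz⟩ * y ∈ Ideal.span (insert x (s.erase y : Set R)) := by
        rw [← smul_eq_mul, show a ⟨y, hz⟩ • y = _ from eq_sub_of_add_eq ha]
        refine sub_mem (Ideal.subset_span (Set.mem_insert _ _)) (sum_mem fun w hw ↦ ?_)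
        refine Submodule.smul_mem _ _ (Ideal.subset_span (Set.mem_insert_of_mem _ ?_))
        simpa [Subtype.ext_iff] using hw
      exact (Ideal.unit_mul_mem_iff_mem _ haz).mp hax
    · exact Ideal.subset_span (Set.mem_insert_of_mem _ (Finset.mem_erase.mpr ⟨hyz, hy⟩))

lemma spanFinrank_maximalIdeal_quotient_add_one_le [IsLocalRing R] [IsNoetherianRing R] {x : R}
    (hx : x ∈ maximalIdeal R) (hx2 : x ∉ maximalIdeal R ^ 2) [IsLocalRing (R ⧸ span {x})] :
    (maximalIdeal (R ⧸ span {x})).spanFinrank + 1 ≤ (maximalIdeal R).spanFinrank := by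
  obtain ⟨t, hcard, ht⟩ := exists_span_insert_eq_maximalIdeal hx hx2
  have hmap : Ideal.span (Ideal.Quotient.mk (span {x}) '' t) = maximalIdeal (R ⧸ span {x}) := by
    rw [← map_maximalIdeal_of_surjective _ (Ideal.Quotient.mk_surjective (I := span {x})), ← ht,
      Ideal.map_span, Set.image_insert_eq, Ideal.Quotient.eq_zero_iff_mem.mpr
        (mem_span_singleton_self x), Ideal.span_insert_zero]
  have hle := Submodule.spanFinrank_span_le_ncard_of_finite (R := R ⧸ span {x})
    (t.finite_toSet.image (Ideal.Quotient.mk (span {x})))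
  rw [← hcard, ← hmap]
  grw [← Set.ncard_coe_finset t, ← Set.ncard_image_le t.finite_toSet]
  exact Nat.add_le_add_right hle 1

variable [IsRegularLocalRing R]

lemma isRegularLocalRing_quotient_span_singleton {x : R} (hx : x ∈ maximalIdeal R)
    (hx2 : x ∉ maximalIdeal R ^ 2) : IsRegularLocalRing (R ⧸ span {x}) := by
  have : Nontrivial (R ⧸ span {x}) :=
    Ideal.Quotient.nontrivial_iff.mpr
      (ne_top_of_le_ne_top Ideal.IsPrime.ne_top' ((span_singleton_le_iff_mem _).mpr hx))
  have : IsLocalRing (R ⧸ span {x}) := .of_surjective' _ Ideal.Quotient.mk_surjective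
  apply IsRegularLocalRing.of_spanFinrank_maximalIdeal_le
  have hdim := Ideal.height_le_ringKrullDim_quotient_add_one hx
  rw [maximalIdeal_height_eq_ringKrullDim, ← IsRegularLocalRing.spanFinrank_maximalIdeal] at hdim
  have := (Nat.cast_le (α := WithBot ℕ∞)).mpr (spanFinrank_maximalIdeal_quotient_add_one_le hx hx2)
  push_cast at this
  exact ENat.WithBot.add_le_add_one_right_iff.mp (this.trans hdim)

lemma exists_mem_maximalIdeal_notMem_sq_notMem_minimalPrimes (h : maximalIdeal R ≠ ⊥) :
    ∃ x ∈ maximalIdeal R, x ∉ maximalIdeal R ^ 2 ∧ ∀ p ∈ minimalPrimes R, x ∉ p := by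
  classical
  by_contra! hcover
  have hsub : (maximalIdeal R : Set R) ⊆
      ⋃ p ∈ insert (maximalIdeal R ^ 2) (minimalPrimes R), (p : Set R) := by
    intro x hx
    by_cases hx2 : x ∈ maximalIdeal R ^ 2
    · exact Set.mem_biUnion (Set.mem_insert _ _) hx2
    · obtain ⟨p, hp, hxp⟩ := hcover x hx hx2
      exact Set.mem_biUnion (Set.mem_insert_of_mem _ hp) hxp
  rw [Ideal.subset_union_prime_finite ((minimalPrimes.finite_of_isNoetherianRing R).insert _)
    (maximalIdeal R ^ 2) (maximalIdeal R ^ 2)] at hsub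
  · obtain ⟨p, rfl | hp, hle⟩ := hsub
    · exact h (Submodule.eq_bot_of_le_smul_of_le_jacobson_bot _ _ (IsNoetherian.noetherian _)
        (by rwa [smul_eq_mul, ← pow_two]) (maximalIdeal_le_jacobson _))
    · have := hp.1.1
      obtain rfl : p = maximalIdeal R :=
        (le_maximalIdeal Ideal.IsPrime.ne_top').antisymm hle
      have hdim := IsRegularLocalRing.spanFinrank_maximalIdeal (R := R)
      rw [← maximalIdeal_height_eq_ringKrullDim, Ideal.height_eq_zero_iff.mpr hp] at hdim
      exact h ((Submodule.spanFinrank_eq_zero_iff_eq_bot (IsNoetherian.noetherian _)).mp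
        (by exact_mod_cast hdim))
  · intro p hp hne _
    exact ((Set.mem_insert_iff.mp hp).resolve_left hne).1.1

theorem isDomain_of_isRegularLocalRing (R : Type*) [CommRing R] [IsRegularLocalRing R] :
    IsDomain R := by
  induction hn : (maximalIdeal R).spanFinrank using Nat.strong_induction_on generalizing R with
  | _ n ih =>
  by_cases hbot : maximalIdeal R = ⊥
  · exact (IsLocalRing.isField_iff_maximalIdeal_eq.mpr hbot).isDomain
  obtain ⟨x, hx, hx2, hmin⟩ := exists_mem_maximalIdeal_notMem_sq_notMem_minimalPrimes hbot
  have := isRegularLocalRing_quotient_span_singleton hx hx2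
  have : IsDomain (R ⧸ span {x}) :=
    ih _ (hn ▸ spanFinrank_maximalIdeal_quotient_add_one_le hx hx2) _ rfl
  have := (Ideal.Quotient.isDomain_iff_prime (span {x})).mp this
  obtain ⟨p, hp, hpx⟩ := Ideal.exists_minimalPrimes_le (bot_le (a := span {x}))
  have := hp.1.1
  -- Nakayama: a prime `p ⊆ (x)` that does not contain `x` satisfies `p = x p`.
  have hpp : p ≤ span {x} • p := by
    intro y hy
    obtain ⟨a, rfl⟩ := mem_span_singleton'.mp (hpx hy)
    rw [mul_comm]
    exact Submodule.smul_mem_smul (mem_span_singleton_self x)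
      ((hp.1.1.mem_or_mem hy).resolve_right (hmin p hp))
  have hpbot : p = ⊥ := Submodule.eq_bot_of_le_smul_of_le_jacobson_bot _ _
    (IsNoetherian.noetherian _) hpp
    (((span_singleton_le_iff_mem _).mpr hx).trans (maximalIdeal_le_jacobson _))
  have : (⊥ : Ideal R).IsPrime := hpbot ▸ hp.1.1
  exact IsDomain.of_bot_isPrime R

theorem exists_isRegular_ofList_eq_maximalIdeal (R : Type*) [CommRing R] [IsRegularLocalRing R] :
    ∃ xs : List R, IsRegular R xs ∧ Ideal.ofList xs = maximalIdeal R := by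
  induction hn : (maximalIdeal R).spanFinrank using Nat.strong_induction_on generalizing R with
  | _ n ih =>
  by_cases hbot : maximalIdeal R = ⊥
  · exact ⟨[], .nil R R, by rw [Ideal.ofList_nil, hbot]⟩
  have := isDomain_of_isRegularLocalRing R
  obtain ⟨x, hx, hx2, -⟩ := exists_mem_maximalIdeal_notMem_sq_notMem_minimalPrimes hbot
  have := isRegularLocalRing_quotient_span_singleton hx hx2
  have hx0 : x ≠ 0 := fun h ↦ hx2 (h ▸ zero_mem _)
  obtain ⟨ys, hreg, hys⟩ :=
    ih _ (hn ▸ spanFinrank_maximalIdeal_quotient_add_one_le hx hx2) (R ⧸ span {x}) rfl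
  obtain ⟨xs, rfl⟩ := List.map_surjective_iff.mpr Ideal.Quotient.mk_surjective ys
  refine ⟨x :: xs, ?_, ?_⟩
  · rw [isRegular_cons_iff']
    have e : (R ⧸ span {x}) ≃ₗ[R] QuotSMulTop x R :=
      Submodule.quotEquivOfEq _ _ (by simp [← Submodule.ideal_span_singleton_smul])
    exact ⟨IsSMulRegular.of_ne_zero hx0,
      ((e.extendScalarsOfSurjective Ideal.Quotient.mk_surjective).isRegular_congr _).mp hreg⟩
  · rw [← Ideal.map_ofList,
      ← map_maximalIdeal_of_surjective _ (Ideal.Quotient.mk_surjective (I := span {x})),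
      Ideal.map_eq_iff_sup_ker_eq_of_surjective _ Ideal.Quotient.mk_surjective, mk_ker,
      sup_eq_left.mpr ((span_singleton_le_iff_mem _).mpr hx)] at hys
    rw [Ideal.ofList_cons, sup_comm, hys]

end RegularLocalRing

lemma support_quotient_eq_zeroLocus {R : Type*} [CommRing R] (I : Ideal R) :
    Module.support R (R ⧸ I) = PrimeSpectrum.zeroLocus I := by
  rw [Module.support_eq_zeroLocus, Ideal.annihilator_quotient]

lemma hasProjectiveDimensionLE_of_forall_mem_support {R : Type u} [CommRing R]
    [Small.{w} R] [IsNoetherianRing R] (M : ModuleCat.{w} R) [Module.Finite R M] (n : ℕ)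
    (h : ∀ p ∈ Module.support R M,
      HasProjectiveDimensionLE (ModuleCat.of R (Shrink.{w} (R ⧸ p.asIdeal))) n) :
    HasProjectiveDimensionLE M n := by
  suffices H : Module.support R M ⊆ Module.support R M →
      HasProjectiveDimensionLE (ModuleCat.of R M) n from H subset_rfl
  refine IsNoetherianRing.induction_on_isQuotientEquivQuotientPrime R ‹Module.Finite R M›
    (motive := fun N _ _ _ ↦ Module.support R N ⊆ Module.support R M →
      HasProjectiveDimensionLE (ModuleCat.of R N) n) ?_ ?_ ?_
  · intro N _ _ _ _ _
    have := (ModuleCat.isZero_of_subsingleton (ModuleCat.of R N)).hasProjectiveDimensionLT_zero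
    exact hasProjectiveDimensionLT_of_ge _ 0 _ (Nat.zero_le _)
  · intro N _ _ _ p e hN
    have hp : p ∈ Module.support R N := by
      simp [e.support_eq, support_quotient_eq_zeroLocus]
    have := h p (hN hp)
    exact ModuleCat.hasProjectiveDimensionLE_of_linearEquiv
      (M := ModuleCat.of R (Shrink.{w} (R ⧸ p.asIdeal))) (N := ModuleCat.of R N)
      ((Shrink.linearEquiv R _).trans e.symm) n
  · intro N₁ _ _ _ N₂ _ _ _ N₃ _ _ _ f g hf hg hfg ih₁ ih₃ hN₂
    have hS := ModuleCat.shortComplex_shortExact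
      (ModuleCat.shortComplexOfCompEqZero f g hfg.linearMap_comp_eq_zero) hfg hf hg
    exact hS.hasProjectiveDimensionLT_X₂ (n + 1)
      (ih₁ ((Module.support_subset_of_injective f hf).trans hN₂))
      (ih₃ ((Module.support_subset_of_surjective g hg).trans hN₂))

theorem hasProjectiveDimensionLE_quotient_prime {R : Type u} [CommRing R] [Small.{w} R]
    [IsLocalRing R] [IsNoetherianRing R] {xs : List R} (hreg : IsRegular R xs)
    (hxs : Ideal.ofList xs = maximalIdeal R) (p : PrimeSpectrum R) :
    HasProjectiveDimensionLE (ModuleCat.of R (Shrink.{w} (R ⧸ p.asIdeal))) xs.length := by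
  have : WellFoundedGT (PrimeSpectrum R) := ⟨InvImage.wf PrimeSpectrum.asIdeal wellFounded_gt⟩
  induction p using WellFoundedGT.induction with
  | ind p ih =>
  by_cases hp : p.asIdeal = maximalIdeal R
  · rw [← projectiveDimension_le_iff, hp, ← hxs,
      ModuleCat.projectiveDimension_quotient_eq_length xs hreg]
  obtain ⟨x, hx, hxp⟩ := SetLike.exists_of_lt
    (lt_of_le_of_ne (le_maximalIdeal p.2.ne_top) hp)
  let M := ModuleCat.of R (Shrink.{w} (R ⧸ p.asIdeal))
  have hxM : IsSMulRegular M x := by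
    rw [(Shrink.linearEquiv R (R ⧸ p.asIdeal)).isSMulRegular_congr,
      isSMulRegular_quotient_iff_mem_of_smul_mem]
    exact fun y hy ↦ (p.2.mem_or_mem hy).resolve_left hxp
  have hquot : HasProjectiveDimensionLE (ModuleCat.of R (QuotSMulTop x M)) xs.length := by
    refine hasProjectiveDimensionLE_of_forall_mem_support _ _ fun q hq ↦ ih q ?_
    have : p.asIdeal ≤ q.asIdeal ∧ x ∈ q.asIdeal := by
      simpa [M, (Shrink.linearEquiv R (R ⧸ p.asIdeal)).support_eq, support_quotient_eq_zeroLocus,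
        Module.support_quotSMulTop] using hq
    exact (PrimeSpectrum.asIdeal_lt_asIdeal _ _).mp
      (SetLike.lt_iff_le_and_exists.mpr ⟨this.1, x, this.2, hxp⟩)
  have hle : projectiveDimension M + 1 ≤ xs.length :=
    (ModuleCat.projectiveDimension_quotSMulTop_eq_succ_of_isSMulRegular M x hxM hx).symm.trans_le
      ((projectiveDimension_le_iff _ _).mpr hquot)
  rw [← projectiveDimension_le_iff]
  exact (le_add_of_nonneg_right zero_le_one).trans hle

theorem hasProjectiveDimensionLE_length {R : Type u} [CommRing R] [Small.{w} R]
    [IsLocalRing R] [IsNoetherianRing R] {xs : List R} (hreg : IsRegular R xs)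
    (hxs : Ideal.ofList xs = maximalIdeal R) (M : ModuleCat.{w} R) [Module.Finite R M] :
    HasProjectiveDimensionLE M xs.length :=
  hasProjectiveDimensionLE_of_forall_mem_support M _ fun p _ ↦
    hasProjectiveDimensionLE_quotient_prime hreg hxs p

section RegularSequences

variable {R : Type u} [CommRing R] [IsLocalRing R] {M : Type v} [AddCommGroup M] [Module R M]

lemma mem_maximalIdeal_of_isRegular {xs : List R} (h : IsRegular M xs) {x : R} (hx : x ∈ xs) :
    x ∈ maximalIdeal R := by
  refine (mem_maximalIdeal x).mpr fun hu ↦ h.top_ne_smul.symm ?_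
  rw [Ideal.eq_top_of_isUnit_mem (Ideal.ofList xs) (Ideal.subset_span hx) hu,
    Submodule.top_smul]

lemma isRegular_append_singleton_iff {xs : List R} {x : R} [Module.Finite R M]
    (hxs : IsRegular M xs) (hx : x ∈ maximalIdeal R) : IsRegular M (xs ++ [x]) ↔
      IsSMulRegular (M ⧸ (Ideal.ofList xs • ⊤ : Submodule R M)) x := by
  have := hxs.nontrivial
  rw [isRegular_iff_isWeaklyRegular_of_subset_maximalIdeal, isWeaklyRegular_append_iff,
    isWeaklyRegular_singleton_iff, and_iff_right hxs.1]
  intro y hy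
  rcases List.mem_append.mp hy with hy | hy
  · exact mem_maximalIdeal_of_isRegular hxs hy
  · rwa [List.mem_singleton.mp hy]

variable [IsNoetherianRing R] [Small.{v} R] [Module.Finite R M]

lemma exists_isRegular_quotSMulTop {x z : R} {zs : List R} (hx : x ∈ maximalIdeal R)
    (hxM : IsSMulRegular M x) (hzs : IsRegular M (z :: zs)) :
    ∃ ys : List R, ys.length = zs.length ∧ IsRegular (QuotSMulTop x M) ys := by
  have := hzs.nontrivial
  have hlt (N : Type v) [AddCommGroup N] [Module R N] [Module.Finite R N] [Nontrivial N] :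
      maximalIdeal R • (⊤ : Submodule R N) < ⊤ :=
    (Submodule.top_ne_ideal_smul_of_le_jacobson_annihilator
      (maximalIdeal_le_jacobson _)).symm.lt_top
  have := nontrivial_quotSMulTop_of_mem_maximalIdeal M hx
  -- The existence of regular sequences of length `n` is the vanishing of `Extⁱ(R ⧸ m, -)` for
  -- `i < n`, which passes to `M ⧸ x M` with a loss of one degree.
  have hExt := ((ModuleCat.exists_isRegular_tfae (maximalIdeal R) (zs.length + 1) (.of R M)
    (hlt M)).out 3 1).mp
    (by exact ⟨z :: zs, rfl, fun _ ↦ mem_maximalIdeal_of_isRegular hzs, hzs⟩)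
  obtain ⟨ys, hlen, -, hys⟩ := ((ModuleCat.exists_isRegular_tfae (maximalIdeal R) zs.length
    (.of R (QuotSMulTop x M)) (hlt _)).out 1 3).mp fun i hi ↦ by
      have h₁ := AddCommGrpCat.isZero_of_iff_subsingleton.mpr (hExt i (by omega))
      have h₂ := AddCommGrpCat.isZero_of_iff_subsingleton.mpr (hExt (i + 1) (by omega))
      have hS := IsSMulRegular.smulShortComplex_shortExact (M := .of R M) hxM
      exact AddCommGrpCat.subsingleton_of_isZero <| ShortComplex.Exact.isZero_of_both_zeros
        (Ext.covariant_sequence_exact₃' _ hS i (i + 1) rfl)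
        (h₁.eq_zero_of_src _) (h₂.eq_zero_of_tgt _)
  exact ⟨ys, hlen, hys⟩

theorem exists_isRegular_append {xs zs : List R} (hxs : IsRegular M xs) (hzs : IsRegular M zs)
    (hlen : xs.length ≤ zs.length) :
    ∃ ys : List R, xs.length + ys.length = zs.length ∧ IsRegular M (xs ++ ys) := by
  induction xs generalizing M zs with
  | nil => exact ⟨zs, Nat.zero_add _, hzs⟩
  | cons x xs ih =>
    obtain _ | ⟨z, zs⟩ := zs
    · simp at hlen
    obtain ⟨hx, hxs'⟩ := (isRegular_cons_iff M x xs).mp hxs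
    obtain ⟨zs', hlen', hzs'⟩ := exists_isRegular_quotSMulTop
      (mem_maximalIdeal_of_isRegular hxs List.mem_cons_self) hx hzs
    obtain ⟨ys, hys, hreg⟩ := ih hxs' hzs' (by simpa [hlen'] using hlen)
    exact ⟨ys, by simp [← hlen', ← hys]; omega, .cons hx hreg⟩

end RegularSequences

section AssociatedPrimes

variable {R : Type*} [CommRing R] [IsLocalRing R]

lemma exists_colon_eq_notMem_smul_top {M : Type*} [AddCommGroup M] [Module R M]
    [IsNoetherian R M] {x : R} (hx : x ∈ maximalIdeal R) (hxM : IsSMulRegular M x) {a : M}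
    (ha : a ≠ 0) :
    ∃ b ∉ (x • ⊤ : Submodule R M),
      (⊥ : Submodule R M).colon {b} = (⊥ : Submodule R M).colon {a} := by
  -- Divide `a` by `x` as long as possible; each division strictly enlarges `R ∙ a`.
  induction hN : R ∙ a using WellFoundedGT.induction generalizing a with
  | ind N ih =>
  by_cases hax : a ∈ (x • ⊤ : Submodule R M)
  · obtain ⟨c, -, rfl⟩ := (Submodule.mem_smul_pointwise_iff_exists _ _ _).mp hax
    have hc : c ≠ 0 := by rintro rfl; simp at ha
    have hcolon : (⊥ : Submodule R M).colon {c} = (⊥ : Submodule R M).colon {x • c} := by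
      ext r
      simp only [Submodule.mem_colon_singleton, Submodule.mem_bot, smul_comm r x]
      exact ⟨fun h ↦ by rw [h, smul_zero], fun h ↦ hxM.right_eq_zero_of_smul h⟩
    have hlt : R ∙ (x • c) < R ∙ c := by
      refine lt_of_le_not_ge (Submodule.span_singleton_smul_le _ _ _) fun hle ↦ hc ?_
      obtain ⟨r, hr⟩ := Submodule.mem_span_singleton.mp
        ((Submodule.span_singleton_le_iff_mem _ _).mp hle)
      have hu : IsUnit (1 - r * x) :=
        IsLocalRing.isUnit_one_sub_self_of_mem_nonunits _ ((maximalIdeal R).mul_mem_left r hx)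
      rw [← hu.smul_eq_zero, sub_smul, one_smul, mul_smul, hr, sub_self]
    obtain ⟨b, hb, hbc⟩ := ih _ (hN ▸ hlt) hc rfl
    exact ⟨b, hb, hbc.trans hcolon⟩
  · exact ⟨a, hax, rfl⟩

variable [IsNoetherianRing R]

lemma exists_lt_isAssociatedPrime_quotSMulTop {M : Type*} [AddCommGroup M] [Module R M]
    [Module.Finite R M] {x : R} (hx : x ∈ maximalIdeal R) (hxM : IsSMulRegular M x)
    {p : PrimeSpectrum R} (hp : IsAssociatedPrime p.asIdeal M) :
    ∃ q : PrimeSpectrum R, p < q ∧ IsAssociatedPrime q.asIdeal (QuotSMulTop x M) := by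
  obtain ⟨-, a, ha⟩ := isAssociatedPrime_iff.mp hp
  have ha0 : a ≠ 0 := by
    rintro rfl
    exact p.2.ne_top (ha.trans (by ext; simp [Submodule.mem_colon_singleton]))
  obtain ⟨b, hbx, hba⟩ := exists_colon_eq_notMem_smul_top hx hxM ha0
  obtain ⟨q, hq, hle⟩ := exists_le_isAssociatedPrime_of_isNoetherianRing R
    (Submodule.Quotient.mk b : QuotSMulTop x M)
    (mt (Submodule.Quotient.mk_eq_zero _).mp hbx)
  have hpq : p.asIdeal ≤ q := by
    intro r hr
    apply hle
    rw [ha, ← hba, Submodule.mem_colon_singleton, Submodule.mem_bot] at hr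
    rw [Submodule.mem_colon_singleton, ← Submodule.Quotient.mk_smul, hr]
    exact zero_mem _
  have hxq : x ∈ q := by
    apply hle
    rw [Submodule.mem_colon_singleton, ← Submodule.Quotient.mk_smul, Submodule.mem_bot,
      Submodule.Quotient.mk_eq_zero]
    exact Submodule.smul_mem_pointwise_smul _ _ _ trivial
  have hxp : x ∉ p.asIdeal := by
    rw [ha, Submodule.mem_colon_singleton, Submodule.mem_bot]
    exact mt hxM.right_eq_zero_of_smul ha0
  exact ⟨⟨q, hq.1⟩, (PrimeSpectrum.asIdeal_lt_asIdeal _ _).mp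
    (SetLike.lt_iff_le_and_exists.mpr ⟨hpq, x, hxq, hxp⟩), hq⟩

theorem length_le_coheight_of_isAssociatedPrime {M : Type*} [AddCommGroup M] [Module R M]
    [Module.Finite R M] {xs : List R} (hmem : ∀ x ∈ xs, x ∈ maximalIdeal R)
    (hreg : IsWeaklyRegular M xs) {p : PrimeSpectrum R} (hp : IsAssociatedPrime p.asIdeal M) :
    (xs.length : ℕ∞) ≤ Order.coheight p := by
  induction xs generalizing M p with
  | nil => simp
  | cons x xs ih =>
    obtain ⟨hx, hxs⟩ := (isWeaklyRegular_cons_iff M x xs).mp hreg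
    obtain ⟨q, hpq, hq⟩ :=
      exists_lt_isAssociatedPrime_quotSMulTop (hmem x List.mem_cons_self) hx hp
    calc ((x :: xs).length : ℕ∞) = xs.length + 1 := by simp
      _ ≤ Order.coheight q + 1 := by
        gcongr
        exact ih (fun y hy ↦ hmem y (List.mem_cons_of_mem x hy)) hxs hq
      _ ≤ Order.coheight p := Order.coheight_add_one_le hpq

end AssociatedPrimes

lemma coheight_le_ringKrullDim_quotient {R : Type*} [CommRing R] {I : Ideal R}
    {p : PrimeSpectrum R} (h : I ≤ p.asIdeal) :
    (Order.coheight p : WithBot ℕ∞) ≤ ringKrullDim (R ⧸ I) := by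
  rw [ringKrullDim_quotient, Order.coheight_eq_krullDim_Ici]
  have hsub : Set.Ici p ⊆ PrimeSpectrum.zeroLocus (R := R) I := fun q hq ↦ h.trans hq
  exact Order.krullDim_le_of_strictMono (Set.inclusion hsub) fun _ _ hab ↦ hab

section CohenMacaulay

variable {R : Type*} [CommRing R] [IsLocalRing R] [IsNoetherianRing R] {xs zs : List R}

lemma length_le_of_length_eq_ringKrullDim (hdim : (zs.length : WithBot ℕ∞) = ringKrullDim R)
    (hxs : IsRegular R xs) : xs.length ≤ zs.length := by
  have : Nontrivial (R ⧸ Ideal.ofList xs) :=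
    Ideal.Quotient.nontrivial_iff.mpr (by simpa using hxs.top_ne_smul.symm)
  have h := ringKrullDim_add_length_eq_ringKrullDim_of_isRegular xs hxs
  rw [← hdim] at h
  exact_mod_cast (le_add_of_nonneg_left ringKrullDim_nonneg_of_nontrivial).trans_eq h

lemma length_eq_ringKrullDim_of_ofList_eq_maximalIdeal (hzs : IsRegular R zs)
    (hmax : Ideal.ofList zs = maximalIdeal R) :
    (zs.length : WithBot ℕ∞) = ringKrullDim R := by
  rw [← ringKrullDim_add_length_eq_ringKrullDim_of_isRegular zs hzs, hmax,
    ringKrullDim_eq_zero_of_isField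
      ((Ideal.Quotient.maximal_ideal_iff_isField_quotient _).mp (maximalIdeal.isMaximal R)),
    zero_add]

lemma radical_ofList_eq_maximalIdeal (hxs : IsRegular R xs)
    (hdim : (xs.length : WithBot ℕ∞) = ringKrullDim R) :
    (Ideal.ofList xs).radical = maximalIdeal R := by
  have hle : Ideal.ofList xs ≤ maximalIdeal R :=
    Ideal.span_le.mpr fun _ ↦ mem_maximalIdeal_of_isRegular hxs
  have hquot : ringKrullDim (R ⧸ Ideal.ofList xs) = 0 := by
    have h := ringKrullDim_add_length_eq_ringKrullDim_of_isRegular xs hxs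
    rw [← hdim] at h
    exact ENat.WithBot.add_natCast_cancel.mp (h.trans (zero_add _).symm)
  refine le_antisymm ((maximalIdeal.isMaximal R).isPrime.radical_le_iff.mpr hle) ?_
  rw [Ideal.radical_eq_sInf]
  refine le_sInf fun p ⟨hxp, hp⟩ ↦ ?_
  have hcoheight : Order.coheight (⟨p, hp⟩ : PrimeSpectrum R) = 0 := by
    have := (coheight_le_ringKrullDim_quotient (p := ⟨p, hp⟩) hxp).trans_eq hquot
    exact le_antisymm (by exact_mod_cast this) bot_le
  have hmax : (⟨p, hp⟩ : PrimeSpectrum R) ≤ ⟨maximalIdeal R, inferInstance⟩ :=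
    le_maximalIdeal hp.ne_top
  exact (Order.coheight_eq_zero.mp hcoheight) hmax

theorem eq_of_le_isAssociatedPrime_quotient_ofList (hzs : IsRegular R zs)
    (hdim : (zs.length : WithBot ℕ∞) = ringKrullDim R) (hxs : IsRegular R xs)
    {p q : PrimeSpectrum R} (hxp : Ideal.ofList xs ≤ p.asIdeal) (hpq : p ≤ q)
    (hq : IsAssociatedPrime q.asIdeal (R ⧸ (Ideal.ofList xs • ⊤ : Submodule R R))) : p = q := by
  obtain ⟨ys, hlen, hys⟩ := exists_isRegular_append hxs hzs
    (length_le_of_length_eq_ringKrullDim hdim hxs)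
  have hq_coheight : (ys.length : ℕ∞) ≤ Order.coheight q :=
    length_le_coheight_of_isAssociatedPrime
      (fun y hy ↦ mem_maximalIdeal_of_isRegular hys (List.mem_append_right xs hy))
      ((isWeaklyRegular_append_iff R xs ys).mp hys.1).2 hq
  have hdim_quot : ringKrullDim (R ⧸ Ideal.ofList xs) = ys.length := by
    have h := ringKrullDim_add_length_eq_ringKrullDim_of_isRegular xs hxs
    rw [← hdim, ← hlen, add_comm xs.length, Nat.cast_add] at h
    exact ENat.WithBot.add_natCast_cancel.mp h
  refine hpq.eq_of_not_lt fun hlt ↦ ?_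
  have hp_coheight : Order.coheight p ≤ ys.length := by
    exact_mod_cast (coheight_le_ringKrullDim_quotient hxp).trans_eq hdim_quot
  have : ((ys.length + 1 : ℕ) : ℕ∞) ≤ ys.length := by
    rw [Nat.cast_add, Nat.cast_one]
    grw [hq_coheight, Order.coheight_add_one_le hlt, hp_coheight]
  exact absurd (Nat.cast_le.mp this) (by omega)

lemma exists_isRegular_append_singleton (hzs : IsRegular R zs)
    (hdim : (zs.length : WithBot ℕ∞) = ringKrullDim R) (hxs : IsRegular R xs)
    {p : Ideal R} [p.IsPrime] (hxp : Ideal.ofList xs ≤ p)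
    (hp : ¬ IsAssociatedPrime p (R ⧸ (Ideal.ofList xs • ⊤ : Submodule R R))) :
    ∃ x ∈ p, IsRegular R (xs ++ [x]) := by
  by_contra! hzero
  have hsub : (p : Set R) ⊆
      ⋃ q ∈ associatedPrimes R (R ⧸ (Ideal.ofList xs • ⊤ : Submodule R R)), (q : Set R) := by
    rw [biUnion_associatedPrimes_eq_compl_regular]
    intro x hx hreg
    apply hzero x hx
    rw [isRegular_append_singleton_iff hxs (le_maximalIdeal Ideal.IsPrime.ne_top' hx)]
    exact hreg
  obtain ⟨q, hq, hpq⟩ := (Ideal.subset_union_prime_finite (f := id) (associatedPrimes.finite R _)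
    ⊥ ⊥ fun q hq _ _ ↦ hq.1).mp hsub
  have := eq_of_le_isAssociatedPrime_quotient_ofList hzs hdim hxs (p := ⟨p, ‹_›⟩)
    (q := ⟨q, hq.1⟩) hxp hpq hq
  obtain rfl : p = q := congrArg PrimeSpectrum.asIdeal this
  exact hp hq

theorem exists_isRegular_isAssociatedPrime_quotient_ofList (hzs : IsRegular R zs)
    (hdim : (zs.length : WithBot ℕ∞) = ringKrullDim R) (p : Ideal R) [p.IsPrime] :
    ∃ xs : List R, IsRegular R xs ∧
      IsAssociatedPrime p (R ⧸ (Ideal.ofList xs • ⊤ : Submodule R R)) := by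
  by_contra! hp
  have hlong (n : ℕ) : ∃ xs : List R, xs.length = n ∧ IsRegular R xs ∧ Ideal.ofList xs ≤ p := by
    induction n with
    | zero => exact ⟨[], rfl, .nil R R, by simp⟩
    | succ n ih =>
      obtain ⟨xs, rfl, hxs, hxp⟩ := ih
      obtain ⟨x, hx, hreg⟩ := exists_isRegular_append_singleton hzs hdim hxs hxp (hp xs hxs)
      exact ⟨xs ++ [x], by simp, hreg, by simp [hxp, hx]⟩
  obtain ⟨xs, hlen, hxs, -⟩ := hlong (zs.length + 1)
  have := length_le_of_length_eq_ringKrullDim hdim hxs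
  omega

end CohenMacaulay

section Ext

variable {C : Type u} [Category.{v} C] [Abelian C] [HasExt.{w} C] {S : ShortComplex C} {E : C}

lemma exists_comp_eq_of_subsingleton_ext_one (hS : S.ShortExact) [Subsingleton (Ext S.X₃ E 1)]
    (f : S.X₁ ⟶ E) : ∃ g : S.X₂ ⟶ E, S.f ≫ g = f := by
  obtain ⟨x, hx⟩ := Ext.contravariant_sequence_exact₁ hS E (Ext.mk₀ f) (add_zero 1)
    (Subsingleton.elim _ _)
  obtain ⟨g, rfl⟩ := Ext.addEquiv₀.symm.surjective x
  exact ⟨g, (Ext.mk₀_bijective S.X₁ E).injective (by simpa using hx)⟩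

lemma subsingleton_ext_one_of_forall_exists_comp_eq (hS : S.ShortExact)
    [Subsingleton (Ext S.X₂ E 1)] (h : ∀ f : S.X₁ ⟶ E, ∃ g : S.X₂ ⟶ E, S.f ≫ g = f) :
    Subsingleton (Ext S.X₃ E 1) := by
  refine subsingleton_of_forall_eq 0 fun x ↦ ?_
  obtain ⟨y, rfl⟩ := Ext.contravariant_sequence_exact₃ hS E x (Subsingleton.elim _ _) (add_zero 1)
  obtain ⟨f, rfl⟩ := Ext.addEquiv₀.symm.surjective y
  obtain ⟨g, rfl⟩ := h f
  simp [← Ext.mk₀_comp_mk₀]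

lemma subsingleton_ext_X₁ (hS : S.ShortExact) (n : ℕ) [Subsingleton (Ext S.X₂ E n)]
    [Subsingleton (Ext S.X₃ E (n + 1))] : Subsingleton (Ext S.X₁ E n) := by
  refine subsingleton_of_forall_eq 0 fun x ↦ ?_
  obtain ⟨y, rfl⟩ := Ext.contravariant_sequence_exact₁ hS E x (add_comm 1 n)
    (Subsingleton.elim _ _)
  rw [Subsingleton.elim y 0, Ext.comp_zero]

lemma subsingleton_ext_X₂ (hS : S.ShortExact) (n : ℕ) [Subsingleton (Ext S.X₁ E n)]
    [Subsingleton (Ext S.X₃ E n)] : Subsingleton (Ext S.X₂ E n) := by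
  refine subsingleton_of_forall_eq 0 fun x ↦ ?_
  obtain ⟨y, rfl⟩ := Ext.contravariant_sequence_exact₂ hS E x (Subsingleton.elim _ _)
  rw [Subsingleton.elim y 0, Ext.comp_zero]

lemma subsingleton_ext_X₃ (hS : S.ShortExact) (n : ℕ) [Subsingleton (Ext S.X₁ E n)]
    [Subsingleton (Ext S.X₂ E (n + 1))] : Subsingleton (Ext S.X₃ E (n + 1)) := by
  refine subsingleton_of_forall_eq 0 fun x ↦ ?_
  obtain ⟨y, rfl⟩ := Ext.contravariant_sequence_exact₃ hS E x (Subsingleton.elim _ _)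
    (add_comm 1 n)
  rw [Subsingleton.elim y 0, Ext.comp_zero]

lemma subsingleton_ext_congr {X Y : C} (e : X ≅ Y) (n : ℕ) :
    Subsingleton (Ext X E n) ↔ Subsingleton (Ext Y E n) :=
  (((extFunctor n).mapIso e.op).app E).addCommGroupIsoToAddEquiv.subsingleton_congr.symm

end Ext

section CharacterModule

variable {R : Type u} [CommRing R] [Small.{w} R]

lemma subsingleton_ext_quotSMulTop_characterModule {M N : Type w} [AddCommGroup M] [Module R M]
    [AddCommGroup N] [Module R N] {x : R} (hM : IsSMulRegular M x)
    (hMN : IsSMulRegular (M ⊗[R] N) x)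
    (hExt : ∀ i, Subsingleton (Ext (ModuleCat.of R M) (.of R (CharacterModule N)) (i + 1)))
    (i : ℕ) :
    Subsingleton (Ext (ModuleCat.of R (QuotSMulTop x M)) (.of R (CharacterModule N)) (i + 1)) := by
  let S := (ModuleCat.of R M).smulShortComplex x
  have hS : S.ShortExact := IsSMulRegular.smulShortComplex_shortExact hM
  obtain _ | i := i
  · have : Subsingleton (Ext S.X₂ (.of R (CharacterModule N)) 1) := hExt 0
    refine subsingleton_ext_one_of_forall_exists_comp_eq hS fun f ↦ ?_
    -- By adjunction, extending maps `M → E` along `x : M → M` is injectivity of `x` on `M ⊗ N`.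
    have hinj : Function.Injective ((LinearMap.lsmul R M x).rTensor N) := by
      rwa [show (LinearMap.lsmul R M x).rTensor N = LinearMap.lsmul R (M ⊗[R] N) x by ext; rfl]
    obtain ⟨g, hg⟩ := rTensor_injective_iff_lcomp_surjective.mp hinj f.hom
    exact ⟨ModuleCat.ofHom g, ModuleCat.hom_ext hg⟩
  · have : Subsingleton (Ext S.X₁ (.of R (CharacterModule N)) (i + 1)) := hExt i
    have : Subsingleton (Ext S.X₂ (.of R (CharacterModule N)) (i + 1 + 1)) := hExt (i + 1)
    exact subsingleton_ext_X₃ hS (i + 1)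

lemma subsingleton_ext_quotient_ofList_smul_top_characterModule {M N : Type w} [AddCommGroup M]
    [Module R M] [AddCommGroup N] [Module R N] {xs : List R} (hM : IsWeaklyRegular M xs)
    (hMN : IsWeaklyRegular (M ⊗[R] N) xs)
    (hExt : ∀ i, Subsingleton (Ext (ModuleCat.of R M) (.of R (CharacterModule N)) (i + 1)))
    (i : ℕ) :
    Subsingleton (Ext (ModuleCat.of R (M ⧸ (Ideal.ofList xs • ⊤ : Submodule R M)))
      (.of R (CharacterModule N)) (i + 1)) := by
  induction xs generalizing M with
  | nil =>
    have e : (M ⧸ (Ideal.ofList ([] : List R) • ⊤ : Submodule R M)) ≃ₗ[R] M :=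
      Submodule.quotEquivOfEqBot _ (by rw [Ideal.ofList_nil, Submodule.bot_smul])
    exact (subsingleton_ext_congr e.toModuleIso _).mpr (hExt i)
  | cons x xs ih =>
    rw [isWeaklyRegular_cons_iff] at hM hMN
    have e := Submodule.quotOfListConsSMulTopEquivQuotSMulTopInner M x xs
    refine (subsingleton_ext_congr e.toModuleIso _).mpr (ih hM.2 ?_
      (subsingleton_ext_quotSMulTop_characterModule hM.1 hMN.1 hExt))
    exact ((QuotSMulTop.quotSMulTopTensorEquivQuotSMulTop x N M).isWeaklyRegular_congr xs).mpr hMN.2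

lemma subsingleton_ext_shrink_quotient_ofList_characterModule {N : Type w} [AddCommGroup N]
    [Module R N] {xs : List R} (hR : IsWeaklyRegular R xs) (hN : IsWeaklyRegular N xs) (i : ℕ) :
    Subsingleton (Ext (ModuleCat.of R (Shrink.{w} (R ⧸ (Ideal.ofList xs • ⊤ : Submodule R R))))
      (.of R (CharacterModule N)) (i + 1)) := by
  let e : Shrink.{w} R ≃ₗ[R] R := Shrink.linearEquiv R R
  let eN : Shrink.{w} R ⊗[R] N ≃ₗ[R] N := (e.rTensor N).trans (TensorProduct.lid R N)
  let eQ : (Shrink.{w} R ⧸ (Ideal.ofList xs • ⊤ : Submodule R (Shrink.{w} R))) ≃ₗ[R]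
      Shrink.{w} (R ⧸ (Ideal.ofList xs • ⊤ : Submodule R R)) :=
    Submodule.Quotient.equiv _ _ e (by rw [Submodule.map_smul'', Submodule.map_top, e.range]) ≪≫ₗ
      (Shrink.linearEquiv R _).symm
  have : Module.Projective R (Shrink.{w} R) := .of_equiv e.symm
  exact (subsingleton_ext_congr eQ.toModuleIso _).mp <|
    subsingleton_ext_quotient_ofList_smul_top_characterModule
      ((e.isWeaklyRegular_congr xs).mpr hR) ((eN.isWeaklyRegular_congr xs).mpr hN)
      (Ext.subsingleton_of_projective _ _) i

end CharacterModule

lemma subsingleton_ext_of_forall_quotient_prime {R : Type u} [CommRing R] [Small.{w} R]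
    [IsNoetherianRing R] {E : ModuleCat.{w} R} {n : ℕ}
    (h : ∀ (p : Ideal R) [p.IsPrime],
      Subsingleton (Ext (ModuleCat.of R (Shrink.{w} (R ⧸ p))) E n))
    (M : ModuleCat.{w} R) [Module.Finite R M] : Subsingleton (Ext M E n) := by
  refine IsNoetherianRing.induction_on_isQuotientEquivQuotientPrime R ‹Module.Finite R M›
    (motive := fun N _ _ _ ↦ Subsingleton (Ext (ModuleCat.of R N) E n)) ?_ ?_ ?_
  · intro N _ _ _ _
    have := (ModuleCat.isZero_of_subsingleton (ModuleCat.of R N)).hasProjectiveDimensionLT_zero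
    exact HasProjectiveDimensionLT.subsingleton _ 0 _ (Nat.zero_le _) E
  · intro N _ _ _ p e
    let e' : N ≃ₗ[R] Shrink.{w} (R ⧸ p.asIdeal) := e.trans (Shrink.linearEquiv R _).symm
    exact (subsingleton_ext_congr e'.toModuleIso n).mpr (h p.asIdeal)
  · intro N₁ _ _ _ N₂ _ _ _ N₃ _ _ _ f g hf hg hfg ih₁ ih₃
    have hS := ModuleCat.shortComplex_shortExact
      (ModuleCat.shortComplexOfCompEqZero f g hfg.linearMap_comp_eq_zero) hfg hf hg
    exact subsingleton_ext_X₂ hS n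

theorem subsingleton_ext_of_forall_exists_injective {R : Type u} [CommRing R] [Small.{w} R]
    [IsNoetherianRing R] {E : ModuleCat.{w} R} {d : ℕ}
    (hd : ∀ (M : ModuleCat.{w} R) [Module.Finite R M], HasProjectiveDimensionLE M d)
    (hE : ∀ (p : Ideal R) [p.IsPrime], ∃ (M : ModuleCat.{w} R) (f : (R ⧸ p) →ₗ[R] M),
      Module.Finite R M ∧ Function.Injective f ∧ ∀ i, Subsingleton (Ext M E (i + 1)))
    (M : ModuleCat.{w} R) [Module.Finite R M] (i : ℕ) : Subsingleton (Ext M E (i + 1)) := by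
  suffices H : ∀ n i, d ≤ i + n → ∀ (M : ModuleCat.{w} R) [Module.Finite R M],
      Subsingleton (Ext M E (i + 1)) from H d i (by omega) M
  intro n
  induction n with
  | zero =>
    intro i hi M _
    have := hd M
    exact HasProjectiveDimensionLT.subsingleton M (d + 1) (i + 1) (by omega) E
  | succ n ih =>
    intro i hi M _
    refine subsingleton_ext_of_forall_quotient_prime (fun p _ ↦ ?_) M
    obtain ⟨M', f, _, hf, hExt⟩ := hE p
    let e : Shrink.{w} (R ⧸ p) ≃ₗ[R] R ⧸ p := Shrink.linearEquiv R (R ⧸ p)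
    let g := f ∘ₗ e.toLinearMap
    have hg : Function.Exact g g.range.mkQ := LinearMap.exact_map_mkQ_range g
    have hS := ModuleCat.shortComplex_shortExact
      (ModuleCat.shortComplexOfCompEqZero g g.range.mkQ hg.linearMap_comp_eq_zero) hg
      (hf.comp e.injective) (Submodule.mkQ_surjective _)
    have := hExt i
    have : Subsingleton (Ext (ModuleCat.of R (M' ⧸ g.range)) E (i + 1 + 1)) :=
      ih (i + 1) (by omega) _
    exact subsingleton_ext_X₁ hS (i + 1)

lemma baer_of_subsingleton_ext_one {R : Type u} [CommRing R] [Small.{w} R] {E : ModuleCat.{w} R}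
    (h : ∀ I : Ideal R, Subsingleton (Ext (ModuleCat.of R (Shrink.{w} (R ⧸ I))) E 1)) :
    Module.Baer R E := by
  intro I f
  let eI := Shrink.linearEquiv.{w} R I
  let eR := Shrink.linearEquiv.{w} R R
  let eQ := Shrink.linearEquiv.{w} R (R ⧸ I)
  let i := eR.symm.toLinearMap ∘ₗ I.subtype ∘ₗ eI.toLinearMap
  let q := eQ.symm.toLinearMap ∘ₗ I.mkQ ∘ₗ eR.toLinearMap
  have hiq : Function.Exact i q := fun x ↦ by
    simp only [i, q, LinearMap.coe_comp, LinearEquiv.coe_coe, Function.comp_apply,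
      LinearEquiv.map_eq_zero_iff, Submodule.mkQ_apply, Submodule.Quotient.mk_eq_zero,
      Set.mem_range, Submodule.subtype_apply, LinearEquiv.symm_apply_eq]
    exact ⟨fun hx ↦ ⟨eI.symm ⟨eR x, hx⟩, by simp⟩, fun ⟨y, hy⟩ ↦ hy ▸ (eI y).2⟩
  have hS := ModuleCat.shortComplex_shortExact
    (ModuleCat.shortComplexOfCompEqZero i q hiq.linearMap_comp_eq_zero) hiq
    (eR.symm.injective.comp (I.subtype_injective.comp eI.injective))
    (eQ.symm.surjective.comp (I.mkQ_surjective.comp eR.surjective))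
  have := h I
  obtain ⟨g, hg⟩ :=
    exists_comp_eq_of_subsingleton_ext_one hS (ModuleCat.ofHom (f ∘ₗ eI.toLinearMap))
  refine ⟨g.hom ∘ₗ eR.symm.toLinearMap, fun x hx ↦ ?_⟩
  simpa [i] using congr($hg (eI.symm ⟨x, hx⟩))

section Flat

lemma flat_of_forall_isWeaklyRegular_of_small {R : Type u} [CommRing R] [IsRegularLocalRing R]
    [Small.{w} R] {N : Type w} [AddCommGroup N] [Module R N]
    (hN : ∀ xs : List R, IsRegular R xs → IsWeaklyRegular N xs) : Module.Flat R N := by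
  obtain ⟨zs, hzs, hmax⟩ := exists_isRegular_ofList_eq_maximalIdeal R
  have hdim := length_eq_ringKrullDim_of_ofList_eq_maximalIdeal hzs hmax
  rw [Module.Flat.iff_characterModule_baer]
  refine baer_of_subsingleton_ext_one (E := .of R (CharacterModule N)) fun I ↦
    subsingleton_ext_of_forall_exists_injective (hasProjectiveDimensionLE_length hzs hmax)
      (fun p _ ↦ ?_) _ 0
  obtain ⟨xs, hxs, hp⟩ := exists_isRegular_isAssociatedPrime_quotient_ofList hzs hdim p
  obtain ⟨-, f, hf⟩ := (isAssociatedPrime_iff_exists_injective_linearMap _ _).mp hp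
  let e := Shrink.linearEquiv.{w} R (R ⧸ (Ideal.ofList xs • ⊤ : Submodule R R))
  exact ⟨.of R _, e.symm.toLinearMap ∘ₗ f, .equiv e.symm, e.symm.injective.comp hf,
    subsingleton_ext_shrink_quotient_ofList_characterModule hxs.1 (hN xs hxs)⟩

theorem flat_of_forall_isWeaklyRegular {R : Type u} [CommRing R] [IsRegularLocalRing R]
    {N : Type v} [AddCommGroup N] [Module R N]
    (hN : ∀ xs : List R, IsRegular R xs → IsWeaklyRegular N xs) : Module.Flat R N := by
  have := small_max.{v} R
  have := flat_of_forall_isWeaklyRegular_of_small (N := ULift.{u} N) fun xs hxs ↦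
    (ULift.moduleEquiv.isWeaklyRegular_congr xs).mpr (hN xs hxs)
  exact .of_linearEquiv ULift.moduleEquiv.symm

end Flat

section BigCohenMacaulay

lemma IsRegularLocal.isRegularLocalRing {R : Type*} [CommRing R] (h : IsRegularLocal R) :
    IsRegularLocalRing R := by
  obtain ⟨_, _, s, hs, hcard⟩ := h
  apply IsRegularLocalRing.of_spanFinrank_maximalIdeal_le
  rw [← hs, ← hcard, Nat.cast_le, ← Set.ncard_coe_finset]
  exact Submodule.spanFinrank_span_le_ncard_of_finite s.finite_toSet

variable {R : Type*} [CommRing R] [IsLocalRing R] {B : Type*} [CommRing B] [Algebra R B]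

lemma IsBigCohenMacaulay.isRegular_map_algebraMap [IsNoetherianRing R]
    (hB : IsBigCohenMacaulay R ‹_› B) {xs : List R} (hxs : IsRegular R xs)
    (hdim : (xs.length : WithBot ℕ∞) = ringKrullDim R) :
    IsRegular B (xs.map (algebraMap R B)) :=
  hB xs hdim (fun _ ↦ mem_maximalIdeal_of_isRegular hxs)
    (radical_ofList_eq_maximalIdeal hxs hdim)

lemma IsBigCohenMacaulay.isWeaklyRegular_of_isRegular [IsNoetherianRing R]
    (hB : IsBigCohenMacaulay R ‹_› B) {xs zs : List R} (hzs : IsRegular R zs)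
    (hdim : (zs.length : WithBot ℕ∞) = ringKrullDim R) (hxs : IsRegular R xs) :
    IsWeaklyRegular B xs := by
  obtain ⟨ys, hlen, hys⟩ := exists_isRegular_append hxs hzs
    (length_le_of_length_eq_ringKrullDim hdim hxs)
  have h := (hB.isRegular_map_algebraMap hys (by rw [List.length_append, hlen, hdim])).1
  exact ((isWeaklyRegular_append_iff B xs ys).mp
    ((isWeaklyRegular_map_algebraMap_iff B B _).mp h)).1

lemma IsBigCohenMacaulay.map_maximalIdeal_ne_top [IsNoetherianRing R]
    (hB : IsBigCohenMacaulay R ‹_› B) {zs : List R} (hzs : IsRegular R zs)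
    (hmax : Ideal.ofList zs = maximalIdeal R) :
    (maximalIdeal R).map (algebraMap R B) ≠ ⊤ := by
  intro htop
  apply (hB.isRegular_map_algebraMap hzs
    (length_eq_ringKrullDim_of_ofList_eq_maximalIdeal hzs hmax)).top_ne_smul
  rw [← Ideal.map_ofList, hmax, htop, Submodule.top_smul]

end BigCohenMacaulay

/-- If `R` is a regular local ring and `B` is a big Cohen–Macaulay
algebra over `R`, then `R → B` is faithfully flat, and hence `IB ∩ R = I` for every ideal
`I ⊆ R`. -/
theorem stmt12 {R : Type*} [CommRing R] [IsLocalRing R] (hreg : IsRegularLocal R)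
    (B : Type*) [CommRing B] [Algebra R B]
    (hB : IsBigCohenMacaulay R ‹IsLocalRing R› B) :
    Module.FaithfullyFlat R B ∧
      ∀ I : Ideal R, (Ideal.map (algebraMap R B) I).comap (algebraMap R B) = I := by
  have := hreg.isRegularLocalRing
  obtain ⟨zs, hzs, hmax⟩ := exists_isRegular_ofList_eq_maximalIdeal R
  have hdim := length_eq_ringKrullDim_of_ofList_eq_maximalIdeal hzs hmax
  have : Module.Flat R B := flat_of_forall_isWeaklyRegular fun xs hxs ↦
    hB.isWeaklyRegular_of_isRegular hzs hdim hxs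
  have : Module.FaithfullyFlat R B := by
    refine ⟨fun {m} hm htop ↦ hB.map_maximalIdeal_ne_top hzs hmax ?_⟩
    rwa [eq_maximalIdeal hm, Ideal.smul_top_eq_map,
      Submodule.restrictScalars_eq_top_iff] at htop
  exact ⟨this, fun I ↦ Ideal.comap_map_eq_self_of_faithfullyFlat I⟩
end
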